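/- arXiv:1412.0684 — 5 statements merged into one kernel-verified Lean document; each statement's English description precedes it below -/
import Mathlib

section
/- Let T be a finite tree on vertex set V rooted at a vertex r, and let w be a weight function for T with state matrix 𝓛(w). Then for every vertex i, the (i,r) entry of the d(i,r)-th power of 𝓛(w) equals the weight of the unique path from i to r: [𝓛(w)^{d(i,r)}]_{i,r} = 𝒲(P_{i,r}), the product of the weights w(u,v) over all edges uv of this path. In particular this entry is strictly positive. -/
/-!
Expanding the matrix power, only `j = i` and the neighbours `j` of `i` contribute to
`(𝓛 ^ (n + 1)) i r = ∑ j, 𝓛 i j * (𝓛 ^ n) j r`. Hence `(𝓛 ^ n) i r` vanishes for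
`n < dist i r` (`stateMatrix_pow_eq_zero`), the diagonal of `𝓛` playing no role. When
`n + 1 = dist i r` in a tree, every neighbour of `i` other than the next vertex of the path to `r`
is at distance greater than `n` from `r`, so a single term survives, and induction along the path
gives the product of its edge weights.
-/

open Finset

/-- A weight function for the simple graph `G`: symmetric, positive exactly on
adjacent pairs, zero otherwise (and zero on the diagonal). -/
def IsWeightFn {V : Type*} (G : SimpleGraph V) (w : V → V → ℝ) : Prop :=
  (∀ u v, w u v = w v u) ∧
  (∀ u v, G.Adj u v → 0 < w u v) ∧
  (∀ u v, u ≠ v → ¬ G.Adj u v → w u v = 0) ∧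
  (∀ v, w v v = 0)

/-- The state matrix `𝓛(w)` (the negative of the weighted Laplacian):
`[𝓛(w)]_{u,v} = w(u,v)` for `u ≠ v`, and `[𝓛(w)]_{v,v} = -∑_{u ≠ v} w(v,u)`. -/
def stateMatrix {V : Type*} [Fintype V] [DecidableEq V] (w : V → V → ℝ) :
    Matrix V V ℝ :=
  Matrix.of fun u v => if u = v then -(∑ x ∈ Finset.univ.erase v, w v x) else w u v

/-- The weight of a walk: the product of the edge weights along it. -/
def walkWeight {V : Type*} {G : SimpleGraph V} (w : V → V → ℝ) {i r : V}
    (p : G.Walk i r) : ℝ :=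
  (p.darts.map fun d => w d.toProd.1 d.toProd.2).prod

theorem stateMatrix_of_adj {V : Type*} [Fintype V] [DecidableEq V] {G : SimpleGraph V}
    (w : V → V → ℝ) {u v : V} (h : G.Adj u v) : stateMatrix w u v = w u v := by
  simp [stateMatrix, h.ne]

theorem stateMatrix_of_not_adj {V : Type*} [Fintype V] [DecidableEq V] {G : SimpleGraph V}
    {w : V → V → ℝ} (hw : IsWeightFn G w) {u v : V} (hne : u ≠ v) (h : ¬ G.Adj u v) :
    stateMatrix w u v = 0 := by
  simp [stateMatrix, hne, hw.2.2.1 u v hne h]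

/-- Powers below the distance have zero entry: a step in the graph lowers the distance to `r` by at
most one. -/
theorem stateMatrix_pow_eq_zero {V : Type*} [Fintype V] [DecidableEq V] {G : SimpleGraph V}
    (hG : G.Connected) {w : V → V → ℝ} (hw : IsWeightFn G w) (r : V) (n : ℕ) :
    ∀ i, n < G.dist i r → (stateMatrix w ^ n) i r = 0 := by
  induction n with
  | zero =>
    intro i hi
    have hne : i ≠ r := by
      rintro rfl
      simp at hi
    simp [hne]
  | succ n ih =>
    intro i hi
    rw [pow_succ', Matrix.mul_apply]
    refine Finset.sum_eq_zero fun j _ => ?_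
    by_cases hij : i = j
    · subst hij
      rw [ih i (by omega), mul_zero]
    · by_cases hadj : G.Adj i j
      · have h1 : G.dist i j = 1 := SimpleGraph.dist_eq_one_iff_adj.mpr hadj
        have h2 : G.dist i r ≤ G.dist i j + G.dist j r := hG.dist_triangle
        rw [ih j (by omega), mul_zero]
      · rw [stateMatrix_of_not_adj hw hij hadj, zero_mul]

theorem isPath_length_eq_dist {V : Type*} {G : SimpleGraph V} (hT : G.IsTree) {i r : V}
    {p : G.Walk i r} (hp : p.IsPath) : p.length = G.dist i r := by
  obtain ⟨q, hq, hl⟩ := hT.connected.exists_path_of_dist i r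
  rw [(hT.existsUnique_path i r).unique hp hq, hl]

/-- In a tree, only the second vertex `v` of a path from `i` to `r` is a neighbour of `i` closer to
`r` than `i`. -/
theorem dist_lt_of_adj_of_ne {V : Type*} {G : SimpleGraph V} (hT : G.IsTree) {i v r j : V}
    {h : G.Adj i v} {q : G.Walk v r} (hp : (SimpleGraph.Walk.cons h q).IsPath)
    (hj : G.Adj i j) (hne : j ≠ v) : q.length < G.dist j r := by
  by_contra! hle
  obtain ⟨s, hs, hl⟩ := hT.connected.exists_path_of_dist j r
  have hd := isPath_length_eq_dist hT hp
  rw [SimpleGraph.Walk.length_cons] at hd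
  -- The shortest path from `j` cannot visit `i`, as its tail would be too short to start there.
  have hi : i ∉ s.support := by
    classical
    intro hi
    have h1 := s.length_dropUntil_le_length hi
    have h2 := SimpleGraph.dist_le (s.dropUntil i hi)
    omega
  have hs' : (SimpleGraph.Walk.cons hj s).IsPath := hs.cons hi
  have heq := (hT.existsUnique_path i r).unique hs' hp
  injection heq with _ hjv
  exact hne hjv

theorem stateMatrix_pow_length {V : Type*} [Fintype V] [DecidableEq V] {G : SimpleGraph V}
    (hT : G.IsTree) {w : V → V → ℝ} (hw : IsWeightFn G w) {i r : V} (p : G.Walk i r)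
    (hp : p.IsPath) : (stateMatrix w ^ p.length) i r = walkWeight w p := by
  induction p with
  | nil => simp [walkWeight]
  | @cons i v r h q ih =>
    have hd := isPath_length_eq_dist hT hp
    rw [SimpleGraph.Walk.length_cons] at hd
    rw [SimpleGraph.Walk.length_cons, pow_succ', Matrix.mul_apply, Finset.sum_eq_single v]
    · rw [ih hp.of_cons, stateMatrix_of_adj w h]
      simp [walkWeight]
    · intro j _ hne
      by_cases hij : i = j
      · subst hij
        rw [stateMatrix_pow_eq_zero hT.connected hw r _ i (by omega), mul_zero]
      · by_cases hadj : G.Adj i j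
        · rw [stateMatrix_pow_eq_zero hT.connected hw r _ j (dist_lt_of_adj_of_ne hT hp hadj hne),
            mul_zero]
        · rw [stateMatrix_of_not_adj hw hij hadj, zero_mul]
    · simp

theorem walkWeight_pos {V : Type*} {G : SimpleGraph V} {w : V → V → ℝ} (hw : IsWeightFn G w)
    {i r : V} (p : G.Walk i r) : 0 < walkWeight w p := by
  refine List.prod_pos fun a ha => ?_
  obtain ⟨d, _, rfl⟩ := List.mem_map.mp ha
  exact hw.2.1 _ _ d.adj

theorem markov_entry_at_dist_eq_pathWeight
    {V : Type*} [Fintype V] [DecidableEq V] (G : SimpleGraph V)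
    (hT : G.IsTree) (r : V) (w : V → V → ℝ) (hw : IsWeightFn G w)
    (i : V) (p : G.Walk i r) (hp : p.IsPath) :
    (stateMatrix w ^ G.dist i r) i r = walkWeight w p ∧
    0 < (stateMatrix w ^ G.dist i r) i r := by
  have h : (stateMatrix w ^ G.dist i r) i r = walkWeight w p := by
    rw [← isPath_length_eq_dist hT hp, stateMatrix_pow_length hT hw p hp]
  exact ⟨h, h ▸ walkWeight_pos hw p⟩
end

section
/- Let G and G' be two finite weighted graphs on the same vertex set V, with weight functions w and w' and state matrices 𝓛(w) and 𝓛(w') respectively. Fix vertices v, r and a neighbor v_s of v. Suppose that (i) v has the same neighbor set N(v) in G and in G', (ii) w(v,j) = w'(v,j) for every j ∈ N(v) (in particular for j = v_s), and (iii) [𝓛(w)^i]_{m,r} = [𝓛(w')^i]_{m,r} for every integer i ≥ 1 and every vertex m ∈ {v} ∪ (N(v) \ {v_s}). Then [𝓛(w)^i]_{v_s,r} = [𝓛(w')^i]_{v_s,r} for every integer i ≥ 1. -/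
/-!
Row `v` of the state matrix is the same for both graphs, because it depends only on the weights at
`v`. Expand `[𝓛 ^ (i + 1)]_{v,r} = ∑ m, [𝓛]_{v,m} [𝓛 ^ i]_{m,r}` along that row. The left-hand sides
agree for the two graphs, as do all terms with `m ≠ vs`: either `m` is `v` or another neighbor
of `v`, or the coefficient `[𝓛]_{v,m}` vanishes. Hence the terms with `m = vs` agree, and their
common coefficient `w(v, vs) > 0` can be cancelled.
-/

open Finset

/-- A row of the state matrix depends only on the same row of the weights. -/
lemma stateMatrix_row_congr {V : Type*} [Fintype V] [DecidableEq V] {w w' : V → V → ℝ} {v : V}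
    (h : ∀ u, w v u = w' v u) (m : V) : stateMatrix w v m = stateMatrix w' v m := by
  by_cases hm : v = m
  · subst hm
    simp [stateMatrix, h]
  · simp [stateMatrix, hm, h]

theorem available_node_entries_determined
    {V : Type*} [Fintype V] [DecidableEq V]
    (G G' : SimpleGraph V) [DecidableRel G.Adj] [DecidableRel G'.Adj]
    (w w' : V → V → ℝ) (hw : IsWeightFn G w) (hw' : IsWeightFn G' w')
    (v r vs : V) (hvs : G.Adj v vs)
    (hN : G.neighborFinset v = G'.neighborFinset v)
    (hww' : ∀ j ∈ G.neighborFinset v, w v j = w' v j)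
    (hM : ∀ i : ℕ, 1 ≤ i → ∀ m, m = v ∨ (m ∈ G.neighborFinset v ∧ m ≠ vs) →
      (stateMatrix w ^ i) m r = (stateMatrix w' ^ i) m r) :
    ∀ i : ℕ, 1 ≤ i → (stateMatrix w ^ i) vs r = (stateMatrix w' ^ i) vs r := by
  obtain ⟨-, hpos, hzero, hdiag⟩ := hw
  obtain ⟨-, -, hzero', hdiag'⟩ := hw'
  have hrow : ∀ u, w v u = w' v u := by
    intro u
    by_cases huv : v = u
    · subst huv
      rw [hdiag, hdiag']
    by_cases hadj : G.Adj v u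
    · exact hww' u (by simpa using hadj)
    · have hadj' : ¬ G'.Adj v u := by
        rw [← SimpleGraph.mem_neighborFinset, ← hN, SimpleGraph.mem_neighborFinset]
        exact hadj
      rw [hzero v u huv hadj, hzero' v u huv hadj']
  intro i hi
  have hexp := hM (i + 1) (by omega) v (Or.inl rfl)
  rw [pow_succ', pow_succ', Matrix.mul_apply, Matrix.mul_apply] at hexp
  simp_rw [← stateMatrix_row_congr hrow] at hexp
  rw [← Finset.add_sum_erase _ _ (Finset.mem_univ vs),
    ← Finset.add_sum_erase _ _ (Finset.mem_univ vs)] at hexp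
  have hrest : ∑ m ∈ Finset.univ.erase vs, stateMatrix w v m * (stateMatrix w ^ i) m r =
      ∑ m ∈ Finset.univ.erase vs, stateMatrix w v m * (stateMatrix w' ^ i) m r := by
    refine Finset.sum_congr rfl fun m hm => ?_
    have hmvs : m ≠ vs := Finset.ne_of_mem_erase hm
    by_cases hmv : v = m
    · rw [hM i hi m (Or.inl hmv.symm)]
    by_cases hadj : G.Adj v m
    · rw [hM i hi m (Or.inr ⟨by simpa using hadj, hmvs⟩)]
    · have hcoeff : stateMatrix w v m = 0 := by
        simp [stateMatrix, hmv, hzero v m hmv hadj]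
      rw [hcoeff, zero_mul, zero_mul]
  rw [hrest] at hexp
  have hne : stateMatrix w v vs ≠ 0 := by
    simpa [stateMatrix, hvs.ne] using (hpos v vs hvs).ne'
  exact mul_left_cancel₀ hne (add_right_cancel hexp)
end

section
/- Let T be a finite tree on vertex set V rooted at a vertex r with weight function w and state matrix 𝓛(w). Let q' be a vertex with q' ≠ r, set k = d(q',r), and let q be the parent of q' (the unique neighbor of q' with d(q,r) = k − 1). Then [𝓛(w)^{k+1}]_{q',r} = w(q',q) · [𝓛(w)^k]_{q,r} − ( Σ_{ℓ ∈ N(q')} w(q',ℓ) ) · [𝓛(w)^k]_{q',r}; that is, in the recursion for [𝓛(w)^{k+1}]_{q',r} the contributions of all children of q' vanish. -/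
/-!
Off the diagonal the state matrix is supported on the edges of `G`, so `[𝓛(w)^n]_{v,r}` vanishes
whenever `n < d(v,r)` (`stateMatrix_pow_apply_eq_zero`): there is no walk that short. Expand
`𝓛(w)^{k+1} = 𝓛(w) * 𝓛(w)^k` along row `q'`, where `k = d(q',r)`. The diagonal term gives the
weighted degree of `q'`, the term at the parent `q` gives `w(q',q) [𝓛(w)^k]_{q,r}`, and in a tree
every other neighbor of `q'` lies at distance `k + 1` from `r` (`dist_eq_of_adj_of_ne_parent`), so
its term is zero.
-/

open Finset

/-- Entries of powers of the state matrix vanish between vertices whose distance exceeds the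
exponent; connectedness excludes the junk value `0` of `dist` on unreachable pairs. -/
lemma stateMatrix_pow_apply_eq_zero {V : Type*} [Fintype V] [DecidableEq V] {G : SimpleGraph V}
    (hG : G.Connected) {w : V → V → ℝ} (hw : IsWeightFn G w) (r : V) (n : ℕ) :
    ∀ v, n < G.dist v r → (stateMatrix w ^ n) v r = 0 := by
  induction n with
  | zero =>
    intro v hv
    have hne : v ≠ r := by
      rintro rfl
      simp at hv
    simp [hne]
  | succ n ih =>
    intro v hv
    rw [pow_succ', Matrix.mul_apply]
    refine Finset.sum_eq_zero fun x _ => ?_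
    by_cases hx : v = x
    · subst hx
      rw [ih v (by omega), mul_zero]
    by_cases hadj : G.Adj v x
    · have h1 : G.dist v x = 1 := SimpleGraph.dist_eq_one_iff_adj.mpr hadj
      have h2 := hG.dist_triangle (u := v) (v := x) (w := r)
      rw [ih x (by omega), mul_zero]
    · simp [stateMatrix, hx, hw.2.2.1 v x hx hadj]

/-- In a tree rooted at `r`, every neighbor of `a` other than its parent `b` is a child of `a`:
prepending `a` to geodesics from two parents would give two different paths from `a` to `r`. -/
lemma dist_eq_of_adj_of_ne_parent {V : Type*} {G : SimpleGraph V} (hT : G.IsTree) {r a b c : V}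
    (hab : G.Adj a b) (hb : G.dist b r + 1 = G.dist a r) (hac : G.Adj a c) (hcb : c ≠ b) :
    G.dist c r = G.dist a r + 1 := by
  have hstep := hT.dist_eq_dist_add_one_of_adj r hac
  rw [SimpleGraph.dist_comm (u := r) (v := a), SimpleGraph.dist_comm (u := r) (v := c)] at hstep
  rcases hstep with h | h
  · exfalso
    obtain ⟨p, hp⟩ := hT.connected.exists_walk_length_eq_dist b r
    obtain ⟨p', hp'⟩ := hT.connected.exists_walk_length_eq_dist c r
    have h1 : (SimpleGraph.Walk.cons hab p).IsPath :=
      SimpleGraph.Walk.isPath_of_length_eq_dist _ (by simp [hp, hb])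
    have h2 : (SimpleGraph.Walk.cons hac p').IsPath :=
      SimpleGraph.Walk.isPath_of_length_eq_dist _ (by simp [hp', h])
    have heq := (hT.existsUnique_path a r).unique h1 h2
    have hsnd := congrArg SimpleGraph.Walk.snd heq
    simp only [SimpleGraph.Walk.snd_cons] at hsnd
    exact hcb hsnd.symm
  · exact h

theorem markov_entry_recursion_children_vanish
    {V : Type*} [Fintype V] [DecidableEq V] (G : SimpleGraph V)
    [DecidableRel G.Adj] (hT : G.IsTree) (r : V)
    (w : V → V → ℝ) (hw : IsWeightFn G w)
    (q' q : V) (hq'r : q' ≠ r) (hadj : G.Adj q' q)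
    (hq : G.dist q r + 1 = G.dist q' r) :
    (stateMatrix w ^ (G.dist q' r + 1)) q' r =
      w q' q * (stateMatrix w ^ G.dist q' r) q r -
        (∑ ℓ ∈ G.neighborFinset q', w q' ℓ) * (stateMatrix w ^ G.dist q' r) q' r := by
  have hdiag : stateMatrix w q' q' = -(∑ ℓ ∈ G.neighborFinset q', w q' ℓ) := by
    simp only [stateMatrix, Matrix.of_apply, if_true]
    congr 1
    symm
    refine Finset.sum_subset ?_ ?_
    · intro x hx
      rw [SimpleGraph.mem_neighborFinset] at hx
      simp [hx.ne']
    · intro x hx hn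
      rw [SimpleGraph.mem_neighborFinset] at hn
      exact hw.2.2.1 q' x (Finset.ne_of_mem_erase hx).symm hn
  have hoff : stateMatrix w q' q = w q' q := by
    simp [stateMatrix, hadj.ne]
  rw [pow_succ', Matrix.mul_apply]
  rw [Finset.sum_eq_add q q' hadj.ne' ?_ (by simp) (by simp), hoff, hdiag]
  · ring
  · rintro x - ⟨hxq, hxq'⟩
    by_cases hx : G.Adj q' x
    · have hd := dist_eq_of_adj_of_ne_parent hT hadj hq hx hxq
      rw [stateMatrix_pow_apply_eq_zero hT.connected hw r _ x (by omega), mul_zero]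
    · simp [stateMatrix, Ne.symm hxq', hw.2.2.1 q' x (Ne.symm hxq') hx]
end

section
/- Let T be the star graph on vertex set V with center c and leaves v_1, …, v_{n−1}, with input at the center c. Let S ⊆ V and suppose there are two distinct leaves u and v with u ∉ S and v ∉ S. Let w be any weight function for T and let w' be the weight function obtained from w by swapping the weights of the edges cu and cv (w'(c,u) = w(c,v), w'(c,v) = w(c,u), and w' = w on all other pairs). Then [𝓛(w)^k]_{s,c} = [𝓛(w')^k]_{s,c} for every s ∈ S and every natural number k; hence if w(c,u) ≠ w(c,v), the two distinct weight functions w and w' are indistinguishable from the measurements at S. -/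
/-!
The swapped weight function is `w` relabelled by the transposition `σ = (u v)`. Its state matrix is
therefore `𝓛(w)` with rows and columns permuted by `σ` (`stateMatrix_comp_perm`), and permuting
rows and columns commutes with taking powers (`submatrix_perm_pow`). So the `(s, c)` entry of the
`k`-th power for the swapped weights is the `(σ s, σ c)` entry of `𝓛(w) ^ k`, and `σ` fixes both
the center `c` and every sensor `s ∈ S`.
-/

open Finset

/-- Relabelling the vertices by `σ` relabels the rows and columns of the state matrix. -/
theorem stateMatrix_comp_perm {V : Type*} [Fintype V] [DecidableEq V] (w : V → V → ℝ)
    (σ : Equiv.Perm V) :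
    stateMatrix (fun a b => w (σ a) (σ b)) = (stateMatrix w).submatrix σ σ := by
  ext a b
  have hsum : ∑ x ∈ Finset.univ.erase b, w (σ b) (σ x)
      = ∑ x ∈ Finset.univ.erase (σ b), w (σ b) x :=
    Finset.sum_equiv σ (by simp) (by simp)
  simp only [stateMatrix, Matrix.of_apply, Matrix.submatrix_apply, hsum, σ.injective.eq_iff]

theorem submatrix_perm_pow {V : Type*} [Fintype V] [DecidableEq V] (M : Matrix V V ℝ)
    (σ : Equiv.Perm V) (k : ℕ) : M.submatrix σ σ ^ k = (M ^ k).submatrix σ σ := by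
  induction k with
  | zero => simp
  | succ k ih => rw [pow_succ, pow_succ, ih, Matrix.submatrix_mul_equiv]

theorem star_swap_indistinguishable
    {V : Type*} [Fintype V] [DecidableEq V] (G : SimpleGraph V) (c : V)
    (hstar : ∀ a b : V, G.Adj a b ↔ (a = c ∧ b ≠ c) ∨ (b = c ∧ a ≠ c))
    (S : Set V) (u v : V) (hu : u ≠ c) (hv : v ≠ c) (huv : u ≠ v)
    (huS : u ∉ S) (hvS : v ∉ S)
    (w : V → V → ℝ) (hw : IsWeightFn G w) :
    (∀ s ∈ S, ∀ k : ℕ,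
      (stateMatrix w ^ k) s c =
        (stateMatrix (fun a b => w (Equiv.swap u v a) (Equiv.swap u v b)) ^ k) s c) ∧
    (w c u ≠ w c v →
      w ≠ fun a b => w (Equiv.swap u v a) (Equiv.swap u v b)) := by
  constructor
  · intro s hs k
    have hsu : s ≠ u := fun h => huS (h ▸ hs)
    have hsv : s ≠ v := fun h => hvS (h ▸ hs)
    rw [stateMatrix_comp_perm, submatrix_perm_pow, Matrix.submatrix_apply,
      Equiv.swap_apply_of_ne_of_ne hsu hsv, Equiv.swap_apply_of_ne_of_ne hu.symm hv.symm]
  · intro hne h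
    apply hne
    have hcu := congr_fun (congr_fun h c) u
    simpa only [Equiv.swap_apply_of_ne_of_ne hu.symm hv.symm, Equiv.swap_apply_left] using hcu
end

section
/- Let P be the path graph on vertices 1, 2, …, n (vertex i adjacent to i+1 for 1 ≤ i ≤ n−1), with both the input and a single sensor placed at the end vertex 1. Let w and w' be two weight functions for P. If [𝓛(w)^k]_{1,1} = [𝓛(w')^k]_{1,1} for every natural number k (equality of all Markov parameters measured at node 1), then w = w'. That is, a single sensor co-located with the input at an end node of a path graph suffices to identify all edge weights. -/
/-!
Write `A = 𝓛(w)`, `B = 𝓛(w')`, and let `e_i` be the standard basis, `e_0` the sensor vertex.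
Consider the space `W` (`commonKrylov`) of vectors `v` for which one polynomial `p` satisfies
`p(A) e_0 = v = p(B) e_0`.  Since `A`, `B` are symmetric with equal moments at `e_0`, the forms
`⟨u, A v⟩` and `⟨u, B v⟩` agree on `W` (`entry_eq_of_mem`); and `A v ∈ W` whenever `v ∈ W` and
`A v = B v` (`mulVec_mem_commonKrylov`).

Going along the path one shows by strong induction on `k` that `e_k ∈ W` and that the `k`-th
columns of `A` and `B` coincide (`column_induction`).  The vector `A e_{k-1} = B e_{k-1}` lies
in `W`, and it is a combination of `e_0, …, e_k` in which `e_k` has nonzero coefficient, so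
`e_k ∈ W`.  The agreement of the forms on `W` then gives the entries `(i, k)` with `i ≤ k`; the
entries with `i > k + 1` vanish, and the remaining entry `(k + 1, k)` is determined because the
columns sum to zero.
-/

open Finset

open Polynomial

section Krylov

variable {V : Type*} [Fintype V] [DecidableEq V]

/-- The vectors `v` admitting one polynomial `p` with `p(A) e_o = v = p(B) e_o`; the vector
`p(A) e_o` is written as the column `o` of `p(A)`. -/
def commonKrylov (A B : Matrix V V ℝ) (o : V) : Submodule ℝ (V → ℝ) where
  carrier := {v | ∃ p : ℝ[X], (aeval A p).col o = v ∧ (aeval B p).col o = v}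
  zero_mem' := ⟨0, by ext; simp, by ext; simp⟩
  add_mem' := by
    rintro u v ⟨p, hpA, hpB⟩ ⟨q, hqA, hqB⟩
    refine ⟨p + q, ?_, ?_⟩
    · rw [← hpA, ← hqA]; ext; simp
    · rw [← hpB, ← hqB]; ext; simp
  smul_mem' := by
    rintro c v ⟨p, hpA, hpB⟩
    refine ⟨c • p, ?_, ?_⟩
    · rw [← hpA]; ext; simp
    · rw [← hpB]; ext; simp

lemma single_base_mem (A B : Matrix V V ℝ) (o : V) :
    (Pi.single o 1 : V → ℝ) ∈ commonKrylov A B o :=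
  ⟨1, by ext i; simp [Matrix.one_apply, Pi.single_apply],
    by ext i; simp [Matrix.one_apply, Pi.single_apply]⟩

lemma mulVec_mem_commonKrylov {A B : Matrix V V ℝ} {o : V} {v : V → ℝ}
    (hv : v ∈ commonKrylov A B o) (hAB : A.mulVec v = B.mulVec v) :
    A.mulVec v ∈ commonKrylov A B o := by
  obtain ⟨p, hpA, hpB⟩ := hv
  refine ⟨X * p, ?_, ?_⟩
  · rw [← hpA]; ext i
    simp [Matrix.mul_apply, Matrix.mulVec, dotProduct]
  · rw [hAB, ← hpB]; ext i
    simp [Matrix.mul_apply, Matrix.mulVec, dotProduct]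

lemma aeval_apply_eq_of_moments {A B : Matrix V V ℝ} {o : V}
    (h : ∀ k : ℕ, (A ^ k) o o = (B ^ k) o o) (p : ℝ[X]) :
    (aeval A p) o o = (aeval B p) o o := by
  simp [Polynomial.aeval_eq_sum_range, Matrix.sum_apply, h]

lemma aeval_isSymm {A : Matrix V V ℝ} (hA : A.IsSymm) (p : ℝ[X]) : (aeval A p).IsSymm := by
  rw [Polynomial.aeval_eq_sum_range, Matrix.IsSymm, Matrix.transpose_sum]
  refine Finset.sum_congr rfl fun k _ => ?_
  rw [Matrix.transpose_smul, (hA.pow k).eq]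

/-- If `p(A) e_o = e_i` and `q(A) e_o = e_j`, the entry `A i j` is the moment of `p X q`. -/
lemma aeval_sandwich {A : Matrix V V ℝ} (hA : A.IsSymm) {o i j : V} {p q : ℝ[X]}
    (hp : (aeval A p).col o = Pi.single i 1) (hq : (aeval A q).col o = Pi.single j 1) :
    (aeval A (p * (X * q))) o o = A i j := by
  have hp' : ∀ x, (aeval A p) o x = (Pi.single i 1 : V → ℝ) x := fun x => by
    rw [← hp, (aeval_isSymm hA p).apply o x |>.symm]; rfl
  have hq' : ∀ x, (aeval A q) x o = (Pi.single j 1 : V → ℝ) x := fun x => by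
    rw [← hq]; rfl
  simp [Matrix.mul_apply, hp', hq', Pi.single_apply]

lemma entry_eq_of_mem {A B : Matrix V V ℝ} (hA : A.IsSymm) (hB : B.IsSymm) {o i j : V}
    (h : ∀ k : ℕ, (A ^ k) o o = (B ^ k) o o)
    (hi : (Pi.single i 1 : V → ℝ) ∈ commonKrylov A B o)
    (hj : (Pi.single j 1 : V → ℝ) ∈ commonKrylov A B o) : A i j = B i j := by
  obtain ⟨p, hpA, hpB⟩ := hi
  obtain ⟨q, hqA, hqB⟩ := hj
  rw [← aeval_sandwich hA hpA hqA, ← aeval_sandwich hB hpB hqB]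
  exact aeval_apply_eq_of_moments h _

end Krylov

lemma column_induction {n : ℕ} (hn : 0 < n) {A B : Matrix (Fin n) (Fin n) ℝ}
    (hA : A.IsSymm) (hB : B.IsSymm)
    (hA0 : ∀ i j : Fin n, j.val + 1 < i.val → A i j = 0)
    (hB0 : ∀ i j : Fin n, j.val + 1 < i.val → B i j = 0)
    (hA1 : ∀ i j : Fin n, j.val + 1 = i.val → A i j ≠ 0)
    (hAs : ∀ j, ∑ i, A i j = 0) (hBs : ∀ j, ∑ i, B i j = 0)
    (h : ∀ k : ℕ, (A ^ k) ⟨0, hn⟩ ⟨0, hn⟩ = (B ^ k) ⟨0, hn⟩ ⟨0, hn⟩) (k : ℕ) :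
    ∀ hk : k < n, (Pi.single ⟨k, hk⟩ 1 : Fin n → ℝ) ∈ commonKrylov A B ⟨0, hn⟩ ∧
      ∀ i, A i ⟨k, hk⟩ = B i ⟨k, hk⟩ := by
  induction k using Nat.strong_induction_on with
  | _ k ih =>
  intro hk
  have hmem : (Pi.single ⟨k, hk⟩ 1 : Fin n → ℝ) ∈ commonKrylov A B ⟨0, hn⟩ := by
    rcases k with _ | m
    · exact single_base_mem A B _
    · have hm : m < n := by omega
      obtain ⟨hmW, hmc⟩ := ih m (by omega) hm
      have hAe : A.mulVec (Pi.single ⟨m, hm⟩ 1) ∈ commonKrylov A B ⟨0, hn⟩ := by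
        refine mulVec_mem_commonKrylov hmW ?_
        ext i
        simpa using hmc i
      have hlow : ∑ i : Fin n with i.val ≤ m, A i ⟨m, hm⟩ • (Pi.single i 1 : Fin n → ℝ) ∈
          commonKrylov A B ⟨0, hn⟩ := by
        refine Submodule.sum_mem _ fun i hi => Submodule.smul_mem _ _ ?_
        have hi' : i.val ≤ m := by simpa using hi
        exact (ih i.val (by omega) i.isLt).1
      -- `A e_m` minus its components along `e_0, …, e_m` is a nonzero multiple of `e_{m+1}`.
      have hdiff : A ⟨m + 1, hk⟩ ⟨m, hm⟩ • (Pi.single ⟨m + 1, hk⟩ 1 : Fin n → ℝ) =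
          A.mulVec (Pi.single ⟨m, hm⟩ 1) -
            ∑ i : Fin n with i.val ≤ m, A i ⟨m, hm⟩ • (Pi.single i 1 : Fin n → ℝ) := by
        ext x
        have hs : (∑ i : Fin n with i.val ≤ m, A i ⟨m, hm⟩ • (Pi.single i 1 : Fin n → ℝ)) x =
            if x.val ≤ m then A x ⟨m, hm⟩ else 0 := by
          simp [Finset.sum_apply, Pi.single_apply]
        rw [Pi.sub_apply, hs]
        rcases lt_trichotomy x.val (m + 1) with hx | hx | hx
        · have : x ≠ ⟨m + 1, hk⟩ := fun e => by simp [e] at hx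
          simp [this, Nat.lt_succ_iff.mp hx]
        · obtain rfl : x = ⟨m + 1, hk⟩ := Fin.ext hx
          simp
        · have : x ≠ ⟨m + 1, hk⟩ := fun e => by simp [e] at hx
          have h2 : ¬ x.val ≤ m := by omega
          simp [this, h2, hA0 x ⟨m, hm⟩ hx]
      have hsm := Submodule.sub_mem _ hAe hlow
      rw [← hdiff] at hsm
      exact (Submodule.smul_mem_iff _ (hA1 ⟨m + 1, hk⟩ ⟨m, hm⟩ rfl)).mp hsm
  refine ⟨hmem, ?_⟩
  have hoff : ∀ i : Fin n, i.val ≠ k + 1 → A i ⟨k, hk⟩ = B i ⟨k, hk⟩ := by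
    intro i hi
    rcases lt_trichotomy i.val k with hx | hx | hx
    · exact entry_eq_of_mem hA hB h (ih i.val hx i.isLt).1 hmem
    · obtain rfl : i = ⟨k, hk⟩ := Fin.ext hx
      exact entry_eq_of_mem hA hB h hmem hmem
    · rw [hA0 i ⟨k, hk⟩ (by simp; omega), hB0 i ⟨k, hk⟩ (by simp; omega)]
  intro i
  by_cases hi : i.val = k + 1
  · have hs : ∑ x, (A x ⟨k, hk⟩ - B x ⟨k, hk⟩) = 0 := by
      rw [Finset.sum_sub_distrib, hAs, hBs, sub_zero]
    rw [Finset.sum_eq_single i] at hs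
    · exact sub_eq_zero.mp hs
    · intro x _ hx
      exact sub_eq_zero.mpr (hoff x fun e => hx (Fin.ext (e.trans hi.symm)))
    · simp
  · exact hoff i hi

section StateMatrix

variable {V : Type*} [Fintype V] [DecidableEq V]

lemma stateMatrix_of_ne (w : V → V → ℝ) {i j : V} (hij : i ≠ j) :
    stateMatrix w i j = w i j := by
  simp [stateMatrix, hij]

lemma stateMatrix_isSymm {w : V → V → ℝ} (hw : ∀ u v, w u v = w v u) :
    (stateMatrix w).IsSymm := by
  refine Matrix.IsSymm.ext fun i j => ?_
  rcases eq_or_ne i j with rfl | hij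
  · rfl
  · rw [stateMatrix_of_ne w hij, stateMatrix_of_ne w hij.symm, hw]

lemma stateMatrix_col_sum {w : V → V → ℝ} (hw : ∀ u v, w u v = w v u) (j : V) :
    ∑ i, stateMatrix w i j = 0 := by
  rw [← Finset.add_sum_erase _ _ (Finset.mem_univ j)]
  have : ∑ i ∈ Finset.univ.erase j, stateMatrix w i j = ∑ i ∈ Finset.univ.erase j, w j i :=
    Finset.sum_congr rfl fun i hi => by
      rw [stateMatrix_of_ne w (Finset.ne_of_mem_erase hi), hw]
  rw [this]
  simp [stateMatrix]

end StateMatrix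

lemma stateMatrix_path_far {n : ℕ} {w : Fin n → Fin n → ℝ}
    (hw : IsWeightFn (SimpleGraph.pathGraph n) w) (i j : Fin n) (hij : j.val + 1 < i.val) :
    stateMatrix w i j = 0 := by
  have hne : i ≠ j := fun e => by subst e; omega
  rw [stateMatrix_of_ne w hne]
  refine hw.2.2.1 i j hne ?_
  rw [SimpleGraph.pathGraph_adj]
  omega

theorem path_graph_identifiable_from_end_sensor
    (n : ℕ) (hn : 0 < n)
    (w w' : Fin n → Fin n → ℝ)
    (hw : IsWeightFn (SimpleGraph.pathGraph n) w)
    (hw' : IsWeightFn (SimpleGraph.pathGraph n) w')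
    (h : ∀ k : ℕ, (stateMatrix w ^ k) ⟨0, hn⟩ ⟨0, hn⟩ =
      (stateMatrix w' ^ k) ⟨0, hn⟩ ⟨0, hn⟩) :
    w = w' := by
  have hsub : ∀ i j : Fin n, j.val + 1 = i.val → stateMatrix w i j ≠ 0 := by
    intro i j hij
    have hne : i ≠ j := fun e => by subst e; omega
    rw [stateMatrix_of_ne w hne]
    refine (hw.2.1 i j ?_).ne'
    rw [SimpleGraph.pathGraph_adj]
    exact Or.inr hij
  funext i j
  rcases eq_or_ne i j with rfl | hij
  · rw [hw.2.2.2, hw'.2.2.2]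
  · rw [← stateMatrix_of_ne w hij, ← stateMatrix_of_ne w' hij]
    exact (column_induction hn (stateMatrix_isSymm hw.1) (stateMatrix_isSymm hw'.1)
      (stateMatrix_path_far hw) (stateMatrix_path_far hw') hsub
      (stateMatrix_col_sum hw.1) (stateMatrix_col_sum hw'.1) h j.val j.isLt).2 i
end
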